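/- (Key step in the proof of Theorem 1.) Suppose V is AoI-antitone. Then for every feasible action a, every channel matrix H, and every device index n, the expected next-state value is nonincreasing in the n-th AoI coordinate: if τ and τ'_(n) agree in all coordinates except that τ'_n ≥ τ_n, then ∑_{s⁺} P(s⁺ | (τ'_(n), H), a) V(s⁺) ≤ ∑_{s⁺} P(s⁺ | (τ, H), a) V(s⁺). -/

import Mathlib

/-- AoI (Age-of-Information) state vector: each device's AoI is a positive natural. -/
abbrev AoI (N : ℕ) := Fin N → ℕ+

/-- Channel state matrix: entry `(n, m)` is the (quantized) state of the channel
between device `n` and the destination on sub-channel `m`, one of `ĥ` levels. -/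
abbrev Chan (N M hh : ℕ) := Fin N → Fin M → Fin hh

/-- A state of the MDP: a pair `s = (τ, H)`. -/
abbrev MDPState (N M hh : ℕ) := AoI N × Chan N M hh

/-- An action: `a n = some m` means device `n` transmits on channel `m`;
`a n = none` means device `n` is idle (`a_n = 0`). A device uses at most
one channel automatically since `a` is a function. -/
abbrev SchedAction (N M : ℕ) := Fin N → Option (Fin M)

/-- Feasibility: every channel `m` is used by exactly one device. -/
def Feasible {N M : ℕ} (a : SchedAction N M) : Prop :=
  ∀ m : Fin M, ∃! n : Fin N, a n = some m

/-- Probability that device `n`'s AoI transition is the one encoded by the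
success flags `b` (`b n = true` iff device `n`'s packet is received):
if `a n = some m`, success has probability `1 - p n m (H n m)` and failure
probability `p n m (H n m)`; an idle device surely fails. -/
def devProb {N M hh : ℕ} (p : Fin N → Fin M → Fin hh → ℝ)
    (H : Chan N M hh) (a : SchedAction N M) (b : Fin N → Bool) (n : Fin N) : ℝ :=
  match a n with
  | some m => if b n then 1 - p n m (H n m) else p n m (H n m)
  | none => if b n then 0 else 1

/-- The next AoI vector: `1` upon reception, `τ n + 1` otherwise. -/
def nextAoI {N : ℕ} (τ : AoI N) (b : Fin N → Bool) : AoI N :=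
  fun n => if b n then 1 else τ n + 1

/-- The expected next-state value `∑_{s⁺} P(s⁺ | s, a) V(s⁺)`, where
`P((τ⁺,H⁺) | (τ,H), a) = (∏_n Pr(τ_n⁺ | τ_n, H, a_n)) · q(H⁺)`. -/
noncomputable def expNext {N M hh : ℕ} (p : Fin N → Fin M → Fin hh → ℝ)
    (q : Chan N M hh → ℝ) (V : MDPState N M hh → ℝ)
    (s : MDPState N M hh) (a : SchedAction N M) : ℝ :=
  ∑ Hp : Chan N M hh, ∑ b : Fin N → Bool,
    q Hp * (∏ n, devProb p s.2 a b n) * V (nextAoI s.1 b, Hp)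

/-- `Q(s,a) = r(s) + γ ∑_{s⁺} P(s⁺ | s, a) V(s⁺)` with reward
`r(s) = -∑_n g_n(τ_n)`. -/
noncomputable def Qval {N M hh : ℕ} (p : Fin N → Fin M → Fin hh → ℝ)
    (q : Chan N M hh → ℝ) (g : Fin N → ℕ+ → ℝ) (γ : ℝ)
    (V : MDPState N M hh → ℝ) (s : MDPState N M hh) (a : SchedAction N M) : ℝ :=
  (- ∑ n, g n (s.1 n)) + γ * expNext p q V s a

/-- `V` is AoI-antitone: increasing a single AoI coordinate (keeping everything
else fixed) cannot increase the value. -/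
def AoIAntitone {N M hh : ℕ} (V : MDPState N M hh → ℝ) : Prop :=
  ∀ (n : Fin N) (H : Chan N M hh) (τ τ' : AoI N),
    (∀ k, k ≠ n → τ' k = τ k) → τ n ≤ τ' n → V (τ', H) ≤ V (τ, H)

/-!
Couple the transitions from `τ` and `τ'` by giving them the same success flags `b` and the same next
channel matrix. The probability of `b` does not depend on the AoI vector, and for each fixed `b` the
next AoI vector is monotone in the current one, so the two expectations compare term by term.
-/

theorem antitone_of_antitone_update {ι β : Type*} {α : ι → Type*} [Finite ι] [DecidableEq ι]
    [∀ i, Preorder (α i)] [Preorder β] {f : (∀ i, α i) → β}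
    (hf : ∀ x i, Antitone fun t => f (Function.update x i t)) : Antitone f := by
  cases nonempty_fintype ι
  intro x y hxy
  -- Pass from `x` to `y` by raising one coordinate at a time.
  have piecewise_le (s : Finset ι) : f (s.piecewise y x) ≤ f x := by
    induction s using Finset.induction_on with
    | empty => rw [Finset.piecewise_empty]
    | insert i s hi ih =>
      calc f ((insert i s).piecewise y x)
          = f (Function.update (s.piecewise y x) i (y i)) := by rw [Finset.piecewise_insert]
        _ ≤ f (Function.update (s.piecewise y x) i (x i)) := hf _ i (hxy i)
        _ = f (s.piecewise y x) := by
          rw [← Finset.piecewise_eq_of_notMem s y x hi, Function.update_eq_self]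
        _ ≤ f x := ih
  simpa only [Finset.piecewise_univ] using piecewise_le Finset.univ

section

variable {N M hh : ℕ}

theorem AoIAntitone.antitone {V : MDPState N M hh → ℝ} (hV : AoIAntitone V)
    (H : Chan N M hh) : Antitone fun τ => V (τ, H) := by
  refine antitone_of_antitone_update fun τ n t t' htt' => hV n H _ _ (fun k hk => ?_) ?_
  · rw [Function.update_of_ne hk, Function.update_of_ne hk]
  · simpa only [Function.update_self] using htt'

theorem nextAoI_mono (b : Fin N → Bool) : Monotone fun τ : AoI N => nextAoI τ b := by
  intro τ τ' hτ n
  dsimp only [nextAoI]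
  split_ifs
  · exact le_rfl
  · exact add_le_add_left (hτ n) 1

theorem devProb_nonneg {p : Fin N → Fin M → Fin hh → ℝ}
    (hp0 : ∀ n m h, 0 ≤ p n m h) (hp1 : ∀ n m h, p n m h ≤ 1)
    (H : Chan N M hh) (a : SchedAction N M) (b : Fin N → Bool) (n : Fin N) :
    0 ≤ devProb p H a b n := by
  unfold devProb
  split <;> split_ifs
  · exact sub_nonneg.2 (hp1 _ _ _)
  · exact hp0 _ _ _
  · exact le_rfl
  · exact zero_le_one

theorem expNext_antitone_in_aoi_general {p : Fin N → Fin M → Fin hh → ℝ}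
    (hp0 : ∀ n m h, 0 ≤ p n m h) (hp1 : ∀ n m h, p n m h ≤ 1)
    {q : Chan N M hh → ℝ} (hq0 : ∀ H, 0 ≤ q H)
    {V : MDPState N M hh → ℝ} (hV : AoIAntitone V)
    (a : SchedAction N M) (H : Chan N M hh) :
    Antitone fun τ => expNext p q V (τ, H) a := by
  intro τ τ' hτ
  refine Finset.sum_le_sum fun Hp _ => Finset.sum_le_sum fun b _ => ?_
  have weight_nonneg : 0 ≤ q Hp * ∏ n, devProb p H a b n :=
    mul_nonneg (hq0 Hp) (Finset.prod_nonneg fun n _ => devProb_nonneg hp0 hp1 H a b n)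
  have value_le : V (nextAoI τ' b, Hp) ≤ V (nextAoI τ b, Hp) :=
    hV.antitone Hp (nextAoI_mono b hτ)
  exact mul_le_mul_of_nonneg_left value_le weight_nonneg

end

/-- **Key step in the proof of Theorem 1.** If `V` is AoI-antitone, then the expected
next-state value `∑_{s⁺} P(s⁺ | s, a) V(s⁺)` is nonincreasing in the `n`-th AoI
coordinate of the current state. -/
theorem expNext_antitone_in_aoi
    (N M hh : ℕ) (hMN : M < N)
    (p : Fin N → Fin M → Fin hh → ℝ)
    (hp0 : ∀ n m h, 0 ≤ p n m h) (hp1 : ∀ n m h, p n m h ≤ 1)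
    (hpmono : ∀ n m, Monotone (p n m))
    (q : Chan N M hh → ℝ) (hq0 : ∀ H, 0 ≤ q H) (hq1 : ∑ H : Chan N M hh, q H = 1)
    (V : MDPState N M hh → ℝ) (hV : AoIAntitone V)
    (a : SchedAction N M) (ha : Feasible a)
    (H : Chan N M hh) (n : Fin N) (τ τ' : AoI N)
    (hagree : ∀ k, k ≠ n → τ' k = τ k) (hτ : τ n ≤ τ' n) :
    expNext p q V (τ', H) a ≤ expNext p q V (τ, H) a := by
  have hττ' : τ ≤ τ' := fun k => (eq_or_ne k n).elim (fun hk => hk ▸ hτ) fun hk => (hagree k hk).ge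
  exact expNext_antitone_in_aoi_general hp0 hp1 hq0 hV a H hττ'
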